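/- For all SKS formulas P and Q and every context C{ }, there exists a derivation using only the switch rule s with premise C[P,Q] and conclusion [C{P}, Q]. -/

import Mathlib

/-!
Deep-inference systems SKSg, SKS and KS for classical propositional logic
(the calculus of structures).  Formulas are built from atoms `a`, their
negations `ā`, and the units `t` (true) and `f` (false) by disjunction
`[P,Q]` (`dis`) and conjunction `(P,Q)` (`con`), and are considered modulo
the congruence `Equiv` generated by associativity, commutativity and the
unit laws.  Rules apply inside an arbitrary one-hole context and modulo the
equivalence.
-/

namespace DI

/-- Formulas of the calculus of structures for classical logic:
units `t`, `f`; atoms `pos a`; negated atoms `neg a`; disjunction `dis`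
(written `[P,Q]`); conjunction `con` (written `(P,Q)`). -/
inductive F : Type where
  | tt  : F
  | ff  : F
  | pos : ℕ → F
  | neg : ℕ → F
  | dis : F → F → F
  | con : F → F → F
deriving DecidableEq

/-- Negation, pushed to the atoms by the De Morgan laws:
`¬t = f`, `¬f = t`, `¬[P,Q] = (¬P,¬Q)`, `¬(P,Q) = [¬P,¬Q]`, `¬¬P = P`. -/
def F.negF : F → F
  | .tt => .ff
  | .ff => .tt
  | .pos a => .neg a
  | .neg a => .pos a
  | .dis P Q => .con P.negF Q.negF
  | .con P Q => .dis P.negF Q.negF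

/-- Atoms are the propositional symbols and their negations. -/
def F.isAtom : F → Prop
  | .pos _ => True
  | .neg _ => True
  | _ => False

/-- Syntactic equivalence of formulas: the smallest congruence generated by
associativity and commutativity of both connectives and the unit laws
`[t,t]=t`, `(f,f)=f`, `[f,P]=P`, `(t,P)=P`. -/
inductive Equiv : F → F → Prop where
  | refl (P : F) : Equiv P P
  | symm {P Q : F} : Equiv P Q → Equiv Q P
  | trans {P Q R : F} : Equiv P Q → Equiv Q R → Equiv P R
  | disComm (P Q : F) : Equiv (.dis P Q) (.dis Q P)
  | conComm (P Q : F) : Equiv (.con P Q) (.con Q P)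
  | disAssoc (P Q R : F) : Equiv (.dis (.dis P Q) R) (.dis P (.dis Q R))
  | conAssoc (P Q R : F) : Equiv (.con (.con P Q) R) (.con P (.con Q R))
  | ttDis : Equiv (.dis .tt .tt) .tt
  | ffCon : Equiv (.con .ff .ff) .ff
  | ffDis (P : F) : Equiv (.dis .ff P) P
  | ttCon (P : F) : Equiv (.con .tt P) P
  | disCongr {P P' Q Q' : F} :
      Equiv P P' → Equiv Q Q' → Equiv (.dis P Q) (.dis P' Q')
  | conCongr {P P' Q Q' : F} :
      Equiv P P' → Equiv Q Q' → Equiv (.con P Q) (.con P' Q')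

/-- One-hole contexts. -/
inductive Ctx : Type where
  | hole : Ctx
  | disL : Ctx → F → Ctx
  | disR : F → Ctx → Ctx
  | conL : Ctx → F → Ctx
  | conR : F → Ctx → Ctx

/-- Plugging a formula into the hole of a context. -/
def Ctx.fill : Ctx → F → F
  | .hole, P => P
  | .disL C Q, P => .dis (C.fill P) Q
  | .disR Q C, P => .dis Q (C.fill P)
  | .conL C Q, P => .con (C.fill P) Q
  | .conR Q C, P => .con Q (C.fill P)

/-- Names of the inference rules of SKSg and SKS. -/
inductive Rule : Type where
  | iDown | iUp | wDown | wUp | cDown | cUp | s | m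
  | aiDown | aiUp | awDown | awUp | acDown | acUp
deriving DecidableEq

/-- The rules, read at the root of a formula (premise on the left,
conclusion on the right). -/
inductive RootStep : Rule → F → F → Prop where
  | iDown (P : F) : RootStep .iDown .tt (.dis P P.negF)
  | iUp (P : F) : RootStep .iUp (.con P P.negF) .ff
  | wDown (P : F) : RootStep .wDown .ff P
  | wUp (P : F) : RootStep .wUp P .tt
  | cDown (P : F) : RootStep .cDown (.dis P P) P
  | cUp (P : F) : RootStep .cUp P (.con P P)
  | s (P Q R : F) : RootStep .s (.con P (.dis Q R)) (.dis (.con P Q) R)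
  | m (P Q R S : F) :
      RootStep .m (.dis (.con P Q) (.con R S)) (.con (.dis P R) (.dis Q S))
  | aiDown (A : F) (h : A.isAtom) : RootStep .aiDown .tt (.dis A A.negF)
  | aiUp (A : F) (h : A.isAtom) : RootStep .aiUp (.con A A.negF) .ff
  | awDown (A : F) (h : A.isAtom) : RootStep .awDown .ff A
  | awUp (A : F) (h : A.isAtom) : RootStep .awUp A .tt
  | acDown (A : F) (h : A.isAtom) : RootStep .acDown (.dis A A) A
  | acUp (A : F) (h : A.isAtom) : RootStep .acUp A (.con A A)

/-- One inference step using a rule from the set `Rs`, applied inside an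
arbitrary context and modulo the equivalence. -/
def Step (Rs : Set Rule) (P Q : F) : Prop :=
  ∃ r ∈ Rs, ∃ (C : Ctx) (P' Q' : F),
    RootStep r P' Q' ∧ Equiv P (C.fill P') ∧ Equiv (C.fill Q') Q

/-- Derivations over an arbitrary step relation: a finite sequence of rule
instances from the premise to the conclusion (modulo the equivalence). -/
inductive Deriv (St : F → F → Prop) : F → F → Prop where
  | eqv {P Q : F} : Equiv P Q → Deriv St P Q
  | step {P Q R : F} : St P Q → Deriv St Q R → Deriv St P R

/-- The system SKSg: general (non-atomic) rules plus switch. -/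
def SKSg : Set Rule := {.iDown, .iUp, .wDown, .wUp, .cDown, .cUp, .s}

/-- The system SKS: atomic rules plus switch and medial. -/
def SKS : Set Rule := {.aiDown, .aiUp, .awDown, .awUp, .acDown, .acUp, .s, .m}

/-- The system KS: the down fragment of SKS. -/
def KS : Set Rule := {.aiDown, .awDown, .acDown, .s, .m}

/-- A proof of `Q` in the system `Rs` is a derivation from the unit `t` to `Q`. -/
def Proof (Rs : Set Rule) (Q : F) : Prop := Deriv (Step Rs) .tt Q

/-- A rule `r` is derivable from a set `Rs` of rules if every instance of `r`
(with premise `P` and conclusion `Q`) can be replaced by a derivation from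
`P` to `Q` using only rules of `Rs`. -/
def RuleDerivable (r : Rule) (Rs : Set Rule) : Prop :=
  ∀ P Q : F, Step {r} P Q → Deriv (Step Rs) P Q

end DI

/-!
Peel `C` from the outside. Deriving inside the outermost layer brings `Q` right below it, and `Q`
then crosses the layer: a disjunction by associativity and commutativity, a conjunction by one
instance of the switch rule.
-/

namespace DI

section

variable {Rs : Set Rule} {P Q R : F}

/-- Composition of contexts: `C.comp D` is `C{D{ }}`, obtained by plugging `D` into the hole of `C`.
It serves as the context of a rule instance that is itself placed inside a context. -/
def Ctx.comp : Ctx → Ctx → Ctx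
  | .hole, D => D
  | .disL C R, D => .disL (C.comp D) R
  | .disR R C, D => .disR R (C.comp D)
  | .conL C R, D => .conL (C.comp D) R
  | .conR R C, D => .conR R (C.comp D)

theorem Ctx.fill_comp (C D : Ctx) (P : F) : (C.comp D).fill P = C.fill (D.fill P) := by
  induction C with
  | hole => rfl
  | disL C R ih | disR R C ih | conL C R ih | conR R C ih => simp only [comp, fill, ih]

theorem Equiv.fill (h : Equiv P Q) (C : Ctx) : Equiv (C.fill P) (C.fill Q) := by
  induction C with
  | hole => exact h
  | disL C R ih => exact .disCongr ih (.refl R)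
  | disR R C ih => exact .disCongr (.refl R) ih
  | conL C R ih => exact .conCongr ih (.refl R)
  | conR R C ih => exact .conCongr (.refl R) ih

theorem Equiv.dis_right_comm (P Q R : F) :
    Equiv (.dis (.dis P Q) R) (.dis (.dis P R) Q) :=
  (Equiv.disAssoc P Q R).trans <|
    (Equiv.disCongr (.refl P) (.disComm Q R)).trans (Equiv.disAssoc P R Q).symm

theorem RootStep.step {r : Rule} (h : RootStep r P Q) (hr : r ∈ Rs) : Step Rs P Q :=
  ⟨r, hr, .hole, P, Q, h, .refl P, .refl Q⟩

theorem Equiv.trans_step (hPQ : Equiv P Q) (hQR : Step Rs Q R) : Step Rs P R := by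
  obtain ⟨r, hr, C, Q', R', hstep, hQ, hR⟩ := hQR
  exact ⟨r, hr, C, Q', R', hstep, hPQ.trans hQ, hR⟩

theorem Step.trans_equiv (hPQ : Step Rs P Q) (hQR : Equiv Q R) : Step Rs P R := by
  obtain ⟨r, hr, C, P', Q', hstep, hP, hQ⟩ := hPQ
  exact ⟨r, hr, C, P', Q', hstep, hP, hQ.trans hQR⟩

theorem Step.fill (h : Step Rs P Q) (C : Ctx) : Step Rs (C.fill P) (C.fill Q) := by
  obtain ⟨r, hr, D, P', Q', hstep, hP, hQ⟩ := h
  refine ⟨r, hr, C.comp D, P', Q', hstep, ?_, ?_⟩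
  · rw [Ctx.fill_comp]
    exact hP.fill C
  · rw [Ctx.fill_comp]
    exact hQ.fill C

theorem Step.switch_left (hs : Rule.s ∈ Rs) (P Q R : F) :
    Step Rs (.con P (.dis Q R)) (.dis (.con P Q) R) :=
  (RootStep.s P Q R).step hs

theorem Step.switch_right (hs : Rule.s ∈ Rs) (P Q R : F) :
    Step Rs (.con (.dis P Q) R) (.dis (.con P R) Q) :=
  (Equiv.conComm (.dis P Q) R).trans_step <|
    (switch_left hs R P Q).trans_equiv (.disCongr (.conComm R P) (.refl Q))

theorem Deriv.single {St : F → F → Prop} (h : St P Q) : Deriv St P Q :=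
  .step h (.eqv (.refl Q))

theorem Equiv.trans_deriv (hPQ : Equiv P Q) (hQR : Deriv (Step Rs) Q R) :
    Deriv (Step Rs) P R := by
  cases hQR with
  | eqv hQR => exact .eqv (hPQ.trans hQR)
  | step hstep hderiv => exact .step (hPQ.trans_step hstep) hderiv

theorem Deriv.trans (hPQ : Deriv (Step Rs) P Q) (hQR : Deriv (Step Rs) Q R) :
    Deriv (Step Rs) P R := by
  induction hPQ with
  | eqv hPQ => exact hPQ.trans_deriv hQR
  | step hstep _ ih => exact .step hstep (ih hQR)

theorem Deriv.fill (h : Deriv (Step Rs) P Q) (C : Ctx) :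
    Deriv (Step Rs) (C.fill P) (C.fill Q) := by
  induction h with
  | eqv h => exact .eqv (h.fill C)
  | step hstep _ ih => exact .step (hstep.fill C) ih

end

/-- Proposition: context insertion for SKS.
For all formulas `P`, `Q` and every context `C{ }`, there is a derivation
using only the switch rule `s` with premise `C[P,Q]` and conclusion
`[C{P}, Q]`. -/
theorem ctx_insertion (P Q : F) (C : Ctx) :
    Deriv (Step {Rule.s}) (C.fill (.dis P Q)) (.dis (C.fill P) Q) := by
  have hs : Rule.s ∈ ({Rule.s} : Set Rule) := rfl
  induction C with
  | hole => exact .eqv (.refl _)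
  | disL C R ih =>
    exact (ih.fill (.disL .hole R)).trans (.eqv (.dis_right_comm (C.fill P) Q R))
  | disR R C ih =>
    exact (ih.fill (.disR R .hole)).trans (.eqv (Equiv.disAssoc R (C.fill P) Q).symm)
  | conL C R ih =>
    exact (ih.fill (.conL .hole R)).trans (.single (.switch_right hs (C.fill P) Q R))
  | conR R C ih =>
    exact (ih.fill (.conR R .hole)).trans (.single (.switch_left hs R (C.fill P) Q))

end DI
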